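/- arXiv:2212.12299 — 2 statements merged into one kernel-verified Lean document; each statement's English description precedes it below -/
import Mathlib

section
/- Let (A, ·, (P_ω)) be a Rota-Baxter family Ω-associative conformal algebra of weight q over a field 𝔽 and (M, (P_{M,ω})) a Rota-Baxter family bimodule over it. Define new actions a ▷_{λ;α,β} m := P_α(a) ·_{λ;α,β} m − P_{M,αβ}(a ·_{λ;α,β} m) and m ◁_{λ;α,β} a := m ·_{λ;α,β} P_β(a) − P_{M,αβ}(m ·_{λ;α,β} a). Then M, equipped with ∂, the actions ▷ and ◁, and the family (P_{M,ω}), is a Rota-Baxter family bimodule over the Rota-Baxter family Ω-associative conformal algebra (A, ⋆, (P_ω)), where a ⋆_{λ;α,β} b := a ·_{λ;α,β} P_β(b) + P_α(a) ·_{λ;α,β} b + q (a ·_{λ;α,β} b). -/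
/-!
Every axiom for `▷`, `◁` and `⋆` reduces to additive bookkeeping after two moves: the conformal
(bi)module associativity reassociates triple products, and a Rota-Baxter identity rewrites each
product of two operator values. For instance, in `a ▷ (b ▷ u)` the term
`P_α(a) · P_{M,βγ}(b · u)` expands to
`P_{M,αβγ}(a · P_{M,βγ}(b · u) + P_α(a) · (b · u) + q (a · (b · u)))`. Its first summand cancels
against the term coming from the outer `▷`, and the others assemble, together with
`P_{αβ}(a ⋆ b) = P_α(a) · P_β(b)`, into `(a ⋆ b) ▷ u`. The two mixed associativities work the same
way. For the Rota-Baxter identities of `▷` and `◁`, the given identity is applied once at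
`P_α(a)` and `u`, and once at `a` and `u` inside `P_{M,αβ}`.
-/

/-- An additive map between additive groups preserves subtraction; this unbundled form applies to
the plain-function operators and actions. -/
lemma map_sub_of_map_add {G H : Type*} [AddCommGroup G] [AddCommGroup H] {f : G → H}
    (h : ∀ x y, f (x + y) = f x + f y) (x y : G) : f (x - y) = f x - f y := by
  rw [eq_sub_iff_add_eq, ← h, sub_add_cancel]


/-- The axioms of an `Ω`-associative conformal algebra over `F`, for a plain-function
family of products `a ·_{λ;α,β} b`: bilinearity, conformal sesquilinearity and
`Ω`-associativity. -/
def OmegaConfFun {F : Type*} [Field F] {Ω : Type*} [Semigroup Ω]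
    {A : Type*} [AddCommGroup A] [Module F A]
    (D : A → A) (mul : F → Ω → Ω → A → A → A) : Prop :=
  (∀ a a' : A, D (a + a') = D a + D a') ∧
  (∀ (c : F) (a : A), D (c • a) = c • D a) ∧
  (∀ (l : F) (α β : Ω) (a a' b : A),
    mul l α β (a + a') b = mul l α β a b + mul l α β a' b) ∧
  (∀ (l c : F) (α β : Ω) (a b : A), mul l α β (c • a) b = c • mul l α β a b) ∧
  (∀ (l : F) (α β : Ω) (a b b' : A),
    mul l α β a (b + b') = mul l α β a b + mul l α β a b') ∧
  (∀ (l c : F) (α β : Ω) (a b : A), mul l α β a (c • b) = c • mul l α β a b) ∧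
  (∀ (l : F) (α β : Ω) (a b : A), mul l α β (D a) b = -l • mul l α β a b) ∧
  (∀ (l : F) (α β : Ω) (a b : A),
    mul l α β a (D b) = D (mul l α β a b) + l • mul l α β a b) ∧
  (∀ (l m : F) (α β γ : Ω) (a b c : A),
    mul (l + m) (α * β) γ (mul l α β a b) c = mul l α (β * γ) a (mul m β γ b c))

/-- A Rota-Baxter family operator of weight `q` on an `Ω`-associative conformal
algebra, for plain-function operators: linearity, commutation with `∂`, and the
Rota-Baxter family identity. -/
def IsRBFamilyOp {F : Type*} [Field F] {Ω : Type*} [Semigroup Ω]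
    {A : Type*} [AddCommGroup A] [Module F A]
    (D : A → A) (mul : F → Ω → Ω → A → A → A) (q : F) (P : Ω → A → A) : Prop :=
  (∀ (ω : Ω) (a a' : A), P ω (a + a') = P ω a + P ω a') ∧
  (∀ (ω : Ω) (c : F) (a : A), P ω (c • a) = c • P ω a) ∧
  (∀ (ω : Ω) (a : A), P ω (D a) = D (P ω a)) ∧
  (∀ (l : F) (α β : Ω) (a b : A),
    mul l α β (P α a) (P β b)
      = P (α * β) (mul l α β (P α a) b + mul l α β a (P β b) + q • mul l α β a b))

/-- The axioms of a bimodule `M` over an `Ω`-associative conformal algebra `A`, with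
left action `al` and right action `ar`. -/
def OmegaBimodFun {F : Type*} [Field F] {Ω : Type*} [Semigroup Ω]
    {A M : Type*} [AddCommGroup A] [Module F A] [AddCommGroup M] [Module F M]
    (D : A → A) (DM : M → M) (mul : F → Ω → Ω → A → A → A)
    (al : F → Ω → Ω → A → M → M) (ar : F → Ω → Ω → M → A → M) : Prop :=
  (∀ u u' : M, DM (u + u') = DM u + DM u') ∧
  (∀ (c : F) (u : M), DM (c • u) = c • DM u) ∧
  (∀ (l : F) (α β : Ω) (a a' : A) (u : M),
    al l α β (a + a') u = al l α β a u + al l α β a' u) ∧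
  (∀ (l c : F) (α β : Ω) (a : A) (u : M), al l α β (c • a) u = c • al l α β a u) ∧
  (∀ (l : F) (α β : Ω) (a : A) (u u' : M),
    al l α β a (u + u') = al l α β a u + al l α β a u') ∧
  (∀ (l c : F) (α β : Ω) (a : A) (u : M), al l α β a (c • u) = c • al l α β a u) ∧
  (∀ (l : F) (α β : Ω) (u : M) (a a' : A),
    ar l α β u (a + a') = ar l α β u a + ar l α β u a') ∧
  (∀ (l c : F) (α β : Ω) (u : M) (a : A), ar l α β u (c • a) = c • ar l α β u a) ∧
  (∀ (l : F) (α β : Ω) (u u' : M) (a : A),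
    ar l α β (u + u') a = ar l α β u a + ar l α β u' a) ∧
  (∀ (l c : F) (α β : Ω) (u : M) (a : A), ar l α β (c • u) a = c • ar l α β u a) ∧
  (∀ (l : F) (α β : Ω) (a : A) (u : M), al l α β (D a) u = -l • al l α β a u) ∧
  (∀ (l : F) (α β : Ω) (a : A) (u : M),
    al l α β a (DM u) = DM (al l α β a u) + l • al l α β a u) ∧
  (∀ (l : F) (α β : Ω) (u : M) (a : A), ar l α β (DM u) a = -l • ar l α β u a) ∧
  (∀ (l : F) (α β : Ω) (u : M) (a : A),
    ar l α β u (D a) = DM (ar l α β u a) + l • ar l α β u a) ∧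
  (∀ (l m : F) (α β γ : Ω) (a b : A) (u : M),
    al (l + m) (α * β) γ (mul l α β a b) u = al l α (β * γ) a (al m β γ b u)) ∧
  (∀ (l m : F) (α β γ : Ω) (a : A) (u : M) (b : A),
    ar (l + m) (α * β) γ (al l α β a u) b = al l α (β * γ) a (ar m β γ u b)) ∧
  (∀ (l m : F) (α β γ : Ω) (u : M) (a b : A),
    ar (l + m) (α * β) γ (ar l α β u a) b = ar l α (β * γ) u (mul m β γ a b))

/-- The Rota-Baxter family bimodule conditions for `(M, (P_{M,ω}))` over a Rota-Baxter
family `Ω`-associative conformal algebra with operators `(P_ω)`:  linearity of the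
`P_{M,ω}`, commutation with `∂`, and the two Rota-Baxter family action identities. -/
def IsRBFBimod {F : Type*} [Field F] {Ω : Type*} [Semigroup Ω]
    {A M : Type*} [AddCommGroup A] [Module F A] [AddCommGroup M] [Module F M]
    (DM : M → M)
    (al : F → Ω → Ω → A → M → M) (ar : F → Ω → Ω → M → A → M)
    (q : F) (P : Ω → A → A) (PM : Ω → M → M) : Prop :=
  (∀ (ω : Ω) (u u' : M), PM ω (u + u') = PM ω u + PM ω u') ∧
  (∀ (ω : Ω) (c : F) (u : M), PM ω (c • u) = c • PM ω u) ∧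
  (∀ (ω : Ω) (u : M), PM ω (DM u) = DM (PM ω u)) ∧
  (∀ (l : F) (α β : Ω) (a : A) (u : M),
    al l α β (P α a) (PM β u)
      = PM (α * β) (al l α β a (PM β u) + al l α β (P α a) u + q • al l α β a u)) ∧
  (∀ (l : F) (α β : Ω) (u : M) (a : A),
    ar l α β (PM α u) (P β a)
      = PM (α * β) (ar l α β u (P β a) + ar l α β (PM α u) a + q • ar l α β u a))

/-- Let `(A, ·, (P_ω))` be a Rota-Baxter family `Ω`-associative conformal algebra of
weight `q` and `(M, (P_{M,ω}))` a Rota-Baxter family bimodule over it.  With the new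
actions `a ▷ m = P_α(a)·m − P_{M,αβ}(a·m)` and `m ◁ a = m·P_β(a) − P_{M,αβ}(m·a)`,
`M` is a Rota-Baxter family bimodule over `(A, ⋆, (P_ω))` where
`a ⋆ b = a·P_β(b) + P_α(a)·b + q(a·b)`. -/
theorem stmt_7 {F : Type*} [Field F] {Ω : Type*} [Semigroup Ω]
    {A M : Type*} [AddCommGroup A] [Module F A] [AddCommGroup M] [Module F M] (q : F)
    (D : A → A) (DM : M → M) (mul : F → Ω → Ω → A → A → A)
    (al : F → Ω → Ω → A → M → M) (ar : F → Ω → Ω → M → A → M)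
    (hA : OmegaConfFun D mul)
    (P : Ω → A → A) (hP : IsRBFamilyOp D mul q P)
    (PM : Ω → M → M)
    (hM : OmegaBimodFun D DM mul al ar)
    (hRBM : IsRBFBimod DM al ar q P PM) :
    OmegaBimodFun D DM
        (fun l α β a b =>
          mul l α β a (P β b) + mul l α β (P α a) b + q • mul l α β a b)
        (fun l α β a u => al l α β (P α a) u - PM (α * β) (al l α β a u))
        (fun l α β u a => ar l α β u (P β a) - PM (α * β) (ar l α β u a))
      ∧ IsRBFBimod DM
          (fun l α β a u => al l α β (P α a) u - PM (α * β) (al l α β a u))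
          (fun l α β u a => ar l α β u (P β a) - PM (α * β) (ar l α β u a))
          q P PM := by
  obtain ⟨Padd, Psmul, PD, Pmul⟩ := hP
  obtain ⟨Dadd, Dsmul, alA, alS, alA', alS', arA, arS, arA', arS', alD, alD', arD, arD',
    assL, assM, assR⟩ := hM
  obtain ⟨Madd, Msmul, MD, Mal, Mar⟩ := hRBM
  have Dsub := map_sub_of_map_add Dadd
  have Msub := fun ω => map_sub_of_map_add (Madd ω)
  have alSub := fun l α β a => map_sub_of_map_add (alA' l α β a)
  have arSub := fun l α β a => map_sub_of_map_add (f := fun u => ar l α β u a)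
    (fun u u' => arA' l α β u u' a)
  beta_reduce at arSub
  refine ⟨⟨Dadd, Dsmul, ?_, ?_, ?_, ?_, ?_, ?_, ?_, ?_, ?_, ?_, ?_, ?_, ?_, ?_, ?_⟩,
    Madd, Msmul, MD, ?_, ?_⟩
  · intros; simp only [Padd, alA, Madd]; abel
  · intros; simp only [Psmul, alS, Msmul, smul_sub]
  · intros; simp only [alA', Madd]; abel
  · intros; simp only [alS', Msmul, smul_sub]
  · intros; simp only [Padd, arA, Madd]; abel
  · intros; simp only [Psmul, arS, Msmul, smul_sub]
  · intros; simp only [arA', Madd]; abel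
  · intros; simp only [arS', Msmul, smul_sub]
  · intros; simp only [PD, alD, Msmul, smul_sub]
  · intros; simp only [alD', Madd, Msmul, MD, Dsub, smul_sub]; abel
  · intros; simp only [arD, Msmul, smul_sub]
  · intros; simp only [PD, arD', Madd, Msmul, MD, Dsub, smul_sub]; abel
  · intro l m α β γ a b u
    have h : P (α * β) (mul l α β a (P β b) + mul l α β (P α a) b + q • mul l α β a b)
        = mul l α β (P α a) (P β b) := by
      rw [Pmul, add_comm (mul l α β a (P β b))]
    simp only [h, alA, alS, assL, alSub, Mal, Madd, Msmul, Msub, mul_assoc]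
    abel
  · intro l m α β γ a u b
    simp only [arSub, alSub, assM, Mal, Mar, Madd, Msmul, Msub, mul_assoc]
    abel
  · intro l m α β γ u a b
    have h : P (β * γ) (mul m β γ a (P γ b) + mul m β γ (P β a) b + q • mul m β γ a b)
        = mul m β γ (P β a) (P γ b) := by
      rw [Pmul, add_comm (mul m β γ a (P γ b))]
    simp only [h, arA, arS, assR, arSub, Mar, Madd, Msmul, Msub, mul_assoc]
    abel
  · intros
    simp only [Mal, Madd, Msmul, Msub, smul_sub]
    abel
  · intros
    simp only [Mar, Madd, Msmul, Msub, smul_sub]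
    abel
end

section
/- Let (A, ·, (P_ω)) be a Rota-Baxter family Ω-associative conformal algebra of weight q over a field 𝔽 and (M, (P_{M,ω})) a Rota-Baxter family bimodule over it. Then for every n ≥ 1 and every n-cochain f, Φ^{n+1}(δⁿ f) = ∂ⁿ(Φⁿ f) as (n+1)-cochains; that is, Φ is a chain map (in positive degrees) from the Hochschild complex of A with coefficients in M to the cochain complex of the Rota-Baxter family operator. -/
/-- The product `α₀ α₁ ⋯ α_m` of a nonempty tuple of elements of the semigroup `Ω`. -/
def prodTuple {Ω : Type*} [Semigroup Ω] : ∀ {m : ℕ}, (Fin (m + 1) → Ω) → Ω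
  | 0, α => α 0
  | _ + 1, α => α 0 * prodTuple fun i => α i.succ

/-- Merging the `λ`-parameters at position `i`: replaces `(λᵢ, λ_{i+1})` by
`λᵢ + λ_{i+1}` (the last parameter being implicit). -/
def mergeF {F : Type*} [Field F] {n : ℕ} (lam : Fin (n + 1) → F) (i : Fin (n + 1)) :
    Fin n → F :=
  fun j =>
    if j.val < i.val then lam j.castSucc
    else if j.val = i.val then lam j.castSucc + lam j.succ
    else lam j.succ

/-- Merging the semigroup indices at position `i`: replaces `(αᵢ, α_{i+1})` by
`αᵢ α_{i+1}`. -/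
def mergeOmega {Ω : Type*} [Semigroup Ω] {n : ℕ} (α : Fin (n + 2) → Ω)
    (i : Fin (n + 1)) : Fin (n + 1) → Ω :=
  fun j =>
    if j.val < i.val then α j.castSucc
    else if j.val = i.val then α j.castSucc * α j.succ
    else α j.succ

/-- Merging a tuple of arguments at position `i`, inserting the element `x` in place of
the pair `(aᵢ, a_{i+1})`. -/
def mergeArg {A : Type*} {n : ℕ} (a : Fin (n + 2) → A) (i : Fin (n + 1)) (x : A) :
    Fin (n + 1) → A :=
  fun j =>
    if j.val < i.val then a j.castSucc
    else if j.val = i.val then x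
    else a j.succ

/-- The Hochschild differential `δ` of the `Ω`-associative conformal algebra `A` with
coefficients in the bimodule `M`, on cochains in `n + 1` arguments. -/
def hochschildDiff {F : Type*} [Field F] {Ω : Type*} [Semigroup Ω]
    {A M : Type*} [AddCommGroup A] [Module F A] [AddCommGroup M] [Module F M]
    (mul : F → Ω → Ω → A → A → A)
    (al : F → Ω → Ω → A → M → M) (ar : F → Ω → Ω → M → A → M) {n : ℕ}
    (f : (Fin n → F) → (Fin (n + 1) → Ω) → (Fin (n + 1) → A) → M) :
    (Fin (n + 1) → F) → (Fin (n + 2) → Ω) → (Fin (n + 2) → A) → M :=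
  fun lam α a =>
    al (lam 0) (α 0) (prodTuple fun i => α i.succ) (a 0)
        (f (fun i => lam i.succ) (fun i => α i.succ) fun i => a i.succ)
      + ∑ i : Fin (n + 1), ((-1 : ℤ) ^ (i.val + 1)) •
          f (mergeF lam i) (mergeOmega α i)
            (mergeArg a i
              (mul (lam i) (α i.castSucc) (α i.succ) (a i.castSucc) (a i.succ)))
      + ((-1 : ℤ) ^ n) •
          ar (∑ j, lam j) (prodTuple fun j : Fin (n + 1) => α j.castSucc)
            (α (Fin.last (n + 1)))
            (f (fun j => lam j.castSucc) (fun j => α j.castSucc) fun j => a j.castSucc)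
            (a (Fin.last (n + 1)))

/-- The differential `∂` of the cochain complex of the Rota-Baxter family operator
`(P_ω)` with coefficients in `(M, (P_{M,ω}))`, on cochains in `n + 1` arguments. -/
def rboDiff {F : Type*} [Field F] {Ω : Type*} [Semigroup Ω]
    {A M : Type*} [AddCommGroup A] [Module F A] [AddCommGroup M] [Module F M]
    (mul : F → Ω → Ω → A → A → A)
    (al : F → Ω → Ω → A → M → M) (ar : F → Ω → Ω → M → A → M)
    (q : F) (P : Ω → A → A) (PM : Ω → M → M) {n : ℕ}
    (f : (Fin n → F) → (Fin (n + 1) → Ω) → (Fin (n + 1) → A) → M) :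
    (Fin (n + 1) → F) → (Fin (n + 2) → Ω) → (Fin (n + 2) → A) → M :=
  fun lam α a =>
    al (lam 0) (α 0) (prodTuple fun i => α i.succ) (P (α 0) (a 0))
        (f (fun i => lam i.succ) (fun i => α i.succ) fun i => a i.succ)
      - PM (prodTuple α)
          (al (lam 0) (α 0) (prodTuple fun i => α i.succ) (a 0)
            (f (fun i => lam i.succ) (fun i => α i.succ) fun i => a i.succ))
      + ∑ i : Fin (n + 1), ((-1 : ℤ) ^ (i.val + 1)) •
          f (mergeF lam i) (mergeOmega α i)
            (mergeArg a i
              (mul (lam i) (α i.castSucc) (α i.succ) (P (α i.castSucc) (a i.castSucc))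
                  (a i.succ)
                + mul (lam i) (α i.castSucc) (α i.succ) (a i.castSucc)
                    (P (α i.succ) (a i.succ))
                + q • mul (lam i) (α i.castSucc) (α i.succ) (a i.castSucc) (a i.succ)))
      + ((-1 : ℤ) ^ n) •
          ar (∑ j, lam j) (prodTuple fun j : Fin (n + 1) => α j.castSucc)
            (α (Fin.last (n + 1)))
            (f (fun j => lam j.castSucc) (fun j => α j.castSucc) fun j => a j.castSucc)
            (P (α (Fin.last (n + 1))) (a (Fin.last (n + 1))))
      - ((-1 : ℤ) ^ n) •
          PM (prodTuple α)
            (ar (∑ j, lam j) (prodTuple fun j : Fin (n + 1) => α j.castSucc)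
              (α (Fin.last (n + 1)))
              (f (fun j => lam j.castSucc) (fun j => α j.castSucc) fun j => a j.castSucc)
              (a (Fin.last (n + 1))))

/-- The chain map `Φ`: `Φ(f)(u) = f(P u₁, …, P uₘ) − Σ_{S ⊊ {1,…,m}} q^{m−1−|S|}
P_M( f(u^S) )`, where `uᵢ^S = P_{αᵢ}(uᵢ)` for `i ∈ S` and `uᵢ^S = uᵢ` otherwise. -/
def phiMap {F : Type*} [Field F] {Ω : Type*} [Semigroup Ω]
    {A M : Type*} [AddCommGroup A] [Module F A] [AddCommGroup M] [Module F M]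
    (q : F) (P : Ω → A → A) (PM : Ω → M → M) {m : ℕ}
    (f : (Fin m → F) → (Fin (m + 1) → Ω) → (Fin (m + 1) → A) → M) :
    (Fin m → F) → (Fin (m + 1) → Ω) → (Fin (m + 1) → A) → M :=
  fun lam α u =>
    f lam α (fun i => P (α i) (u i))
      - ∑ S ∈ Finset.univ.powerset.filter
            (fun S => S ≠ (Finset.univ : Finset (Fin (m + 1)))),
          q ^ (m - S.card) •
            PM (prodTuple α)
              (f lam α fun i => if i ∈ S then P (α i) (u i) else u i)

/-! ### Weighted sums over sets of argument positions -/

section Aux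

variable {F : Type*} [Field F] {M : Type*} [AddCommGroup M] [Module F M]

/-- The weight with which `P_M (f (u^S))` is subtracted in `Φ`: it is `q ^ (m - |S|)` for
a proper subset `S` of the `m + 1` argument positions, and `0` for the full set. -/
def phiWeight (q : F) (m : ℕ) (S : Finset (Fin (m + 1))) : F :=
  if S = Finset.univ then 0 else q ^ (m - S.card)

/-- The functional `c ↦ c(univ) - Σ_S w(S) p(c(S))` on families indexed by subsets of the
argument positions; `Φ(f)(u)` is its value on the family `S ↦ f(u^S)`, with `p = P_M`. -/
def phiLin (q : F) (m : ℕ) (p : M →ₗ[F] M) : (Finset (Fin (m + 1)) → M) →ₗ[F] M :=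
  LinearMap.proj Finset.univ - ∑ S, phiWeight q m S • (p ∘ₗ LinearMap.proj S)

theorem phiLin_apply (q : F) (m : ℕ) (p : M →ₗ[F] M) (c : Finset (Fin (m + 1)) → M) :
    phiLin q m p c = c Finset.univ - ∑ S, phiWeight q m S • p (c S) := by
  simp [phiLin, LinearMap.sum_apply]

/-- The tuple `u^S`, with `P` applied exactly at the positions in `S`. -/
def applyOn {Ω A : Type*} (P : Ω → A → A) {m : ℕ} (α : Fin m → Ω) (u : Fin m → A)
    (S : Finset (Fin m)) : Fin m → A :=
  fun i => if i ∈ S then P (α i) (u i) else u i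

theorem phiMap_eq_phiLin {Ω : Type*} [Semigroup Ω] {A : Type*} [AddCommGroup A] [Module F A]
    (q : F) (P : Ω → A → A) (PM : Ω → M →ₗ[F] M) {m : ℕ}
    (f : (Fin m → F) → (Fin (m + 1) → Ω) → (Fin (m + 1) → A) → M)
    (lam : Fin m → F) (α : Fin (m + 1) → Ω) (u : Fin (m + 1) → A) :
    phiMap q P (fun ω => PM ω) f lam α u
      = phiLin q m (PM (prodTuple α)) (fun S => f lam α (applyOn P α u S)) := by
  rw [phiLin_apply, phiMap, Finset.powerset_univ, Finset.sum_filter]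
  congr 1
  · unfold applyOn
    simp
  · refine Finset.sum_congr rfl fun S _ => ?_
    by_cases h : S = Finset.univ
    · simp [h, phiWeight]
    · rw [phiWeight, if_pos h, if_neg h]
      rfl

/-- The subset of `Fin (m + 2)` avoiding `x` that corresponds to `T ⊆ Fin (m + 1)`. -/
def liftSet {m : ℕ} (x : Fin (m + 2)) (T : Finset (Fin (m + 1))) : Finset (Fin (m + 2)) :=
  T.map x.succAboveEmb

theorem self_notMem_liftSet {m : ℕ} (x : Fin (m + 2)) (T : Finset (Fin (m + 1))) :
    x ∉ liftSet x T := by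
  simp [liftSet, Fin.succAbove_ne]

theorem succAbove_mem_liftSet {m : ℕ} (x : Fin (m + 2)) (T : Finset (Fin (m + 1)))
    (j : Fin (m + 1)) : x.succAbove j ∈ liftSet x T ↔ j ∈ T := by
  simp [liftSet]

theorem insert_liftSet_univ {m : ℕ} (x : Fin (m + 2)) :
    insert x (liftSet x Finset.univ) = Finset.univ := by
  ext y
  rcases Fin.eq_self_or_eq_succAbove x y with rfl | ⟨j, rfl⟩
  · simp
  · simp [succAbove_mem_liftSet]

/-- Subsets of `Fin (m + 2)` come in pairs `T`, `T ∪ {x}` with `x ∉ T`. -/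
theorem sum_finset_split {m : ℕ} (x : Fin (m + 2)) (G : Finset (Fin (m + 2)) → M) :
    ∑ S, G S = ∑ T, (G (liftSet x T) + G (insert x (liftSet x T))) := by
  have hu : (Finset.univ : Finset (Finset (Fin (m + 2))))
      = (insert x (liftSet x Finset.univ)).powerset := by
    rw [insert_liftSet_univ, Finset.powerset_univ]
  have key : ∀ H : Finset (Fin (m + 2)) → M,
      ∑ S ∈ (liftSet x Finset.univ).powerset, H S = ∑ T, H (liftSet x T) := by
    intro H
    symm
    refine Finset.sum_bij (fun T _ => liftSet x T) ?_ ?_ ?_ ?_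
    · intro T _
      rw [Finset.mem_powerset]
      exact Finset.map_subset_map.2 (Finset.subset_univ T)
    · intro T _ T' _ h
      exact Finset.map_injective _ h
    · intro S hS
      rw [Finset.mem_powerset] at hS
      obtain ⟨T, _, hT⟩ := Finset.subset_map_iff.1 hS
      exact ⟨T, Finset.mem_univ _, hT.symm⟩
    · intro T _
      rfl
  rw [hu, Finset.sum_powerset_insert (self_notMem_liftSet x _), key,
    key (fun S => G (insert x S)), Finset.sum_add_distrib]

theorem card_liftSet {m : ℕ} (x : Fin (m + 2)) (T : Finset (Fin (m + 1))) :
    (liftSet x T).card = T.card := by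
  simp [liftSet]

theorem phiWeight_liftSet (q : F) {m : ℕ} (x : Fin (m + 2)) (T : Finset (Fin (m + 1))) :
    phiWeight q (m + 1) (liftSet x T) = q ^ (m + 1 - T.card) := by
  have h : liftSet x T ≠ Finset.univ := fun h =>
    self_notMem_liftSet x T (h ▸ Finset.mem_univ x)
  rw [phiWeight, if_neg h, card_liftSet]

theorem phiWeight_insert_liftSet (q : F) {m : ℕ} (x : Fin (m + 2))
    (T : Finset (Fin (m + 1))) :
    phiWeight q (m + 1) (insert x (liftSet x T)) = phiWeight q m T := by
  have h : insert x (liftSet x T) = Finset.univ ↔ T = Finset.univ := by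
    constructor
    · intro h
      ext j
      have := h ▸ Finset.mem_univ (x.succAbove j)
      simpa [Fin.succAbove_ne, succAbove_mem_liftSet] using this
    · rintro rfl
      exact insert_liftSet_univ x
  rw [phiWeight, phiWeight, Finset.card_insert_of_notMem (self_notMem_liftSet x T),
    card_liftSet, Nat.add_sub_add_right]
  simp only [h]

/-- The full set, excluded from the sum one level down, contributes with coefficient `1`. -/
theorem pow_eq_phiWeight (q : F) {m : ℕ} (T : Finset (Fin (m + 1))) :
    q ^ (m + 1 - T.card) = phiWeight q m T * q + if T = Finset.univ then 1 else 0 := by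
  by_cases h : T = Finset.univ
  · simp [h, phiWeight]
  · have hc : T.card < m + 1 := by
      simpa using (Finset.card_lt_iff_ne_univ T).2 h
    rw [phiWeight, if_neg h, if_neg h, add_zero, ← pow_succ]
    congr 1
    omega

theorem sum_phiWeight_split (q : F) {m : ℕ} (x : Fin (m + 2))
    (g : Finset (Fin (m + 2)) → M) :
    ∑ S, phiWeight q (m + 1) S • g S
      = ∑ T, (q ^ (m + 1 - T.card) • g (liftSet x T)
          + phiWeight q m T • g (insert x (liftSet x T))) := by
  rw [sum_finset_split x]
  simp only [phiWeight_liftSet, phiWeight_insert_liftSet]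

/-- The outer terms of the differentials. `L₀` and `L₁` stand for acting by an element
`a` and by `P a`, so that `h` is the Rota-Baxter identity for the action; splitting the
subsets according to whether they contain the position `x` of `a` gives the claim. -/
theorem phiLin_outer (q : F) {m : ℕ} (x : Fin (m + 2)) (p p' L₀ L₁ : M →ₗ[F] M)
    (h : ∀ v, L₁ (p' v) = p (L₀ (p' v) + L₁ v + q • L₀ v))
    (c : Finset (Fin (m + 2)) → M) (d : Finset (Fin (m + 1)) → M)
    (h₀ : ∀ T, c (liftSet x T) = L₀ (d T))
    (h₁ : ∀ T, c (insert x (liftSet x T)) = L₁ (d T)) :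
    phiLin q (m + 1) p c = L₁ (phiLin q m p' d) - p (L₀ (phiLin q m p' d)) := by
  rw [phiLin_apply, phiLin_apply, sum_phiWeight_split q x (fun S => p (c S)),
    ← insert_liftSet_univ x, h₁]
  simp only [h₀, h₁, pow_eq_phiWeight, map_sub, map_sum, map_smul, h, map_add, smul_add,
    add_smul, ite_smul, one_smul, zero_smul, Finset.sum_add_distrib, Finset.sum_ite_eq',
    Finset.mem_univ, if_true, mul_smul]
  abel

/-- Regrouping of the subsets of `Fin (m + 2)` for a product of the adjacent entries
`i` and `i + 1`. A subset `T ∋ i` comes from the subset containing both entries, a subset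
`T ∌ i` from the three subsets that do not. -/
theorem sum_phiWeight_merge (q : F) {m : ℕ} (i : Fin (m + 1))
    (g : Finset (Fin (m + 2)) → M) :
    ∑ S, phiWeight q (m + 1) S • g S
      = ∑ T, phiWeight q m T •
          (if i ∈ T then g (insert i.castSucc (liftSet i.castSucc T))
            else g (insert i.castSucc (liftSet i.castSucc T))
              + g (liftSet i.castSucc (insert i T)) + q • g (liftSet i.castSucc T)) := by
  set x := i.castSucc
  set H : Finset (Fin (m + 1)) → M := fun T => g (liftSet x T)
  have hne : ∀ T : Finset (Fin (m + 1)), i ∉ T → T ≠ Finset.univ := by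
    rintro _ h rfl
    exact h (Finset.mem_univ i)
  -- If `i ∈ T`, the lift of `T` contains `i + 1` but not `i`; after merging it belongs to
  -- the set `T \ {i}`, which has one element less, whence the weight of that set.
  have hbij : ∑ T with i ∈ T, q ^ (m + 1 - T.card) • H T
      = ∑ T with i ∉ T, phiWeight q m T • H (insert i T) := by
    refine Finset.sum_nbij' (fun T => T.erase i) (fun T => insert i T) ?_ ?_ ?_ ?_ ?_
    · intro T _
      simp
    · intro T _
      simp
    · intro T hT
      exact Finset.insert_erase (by simpa using hT)
    · intro T hT
      exact Finset.erase_insert (by simpa using hT)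
    · intro T hT
      have hi : i ∈ T := by simpa using hT
      have hc := Finset.card_erase_add_one hi
      have hn := hne (T.erase i) (Finset.notMem_erase i T)
      rw [Finset.insert_erase hi, phiWeight, if_neg hn, ← hc, Nat.add_sub_add_right]
  rw [sum_phiWeight_split q x, Finset.sum_add_distrib,
    ← Finset.sum_filter_add_sum_filter_not _ (fun T => i ∈ T), hbij, Finset.sum_filter,
    Finset.sum_filter, ← Finset.sum_add_distrib, ← Finset.sum_add_distrib]
  refine Finset.sum_congr rfl fun T _ => ?_
  by_cases hT : i ∈ T
  · simp [hT]
  · simp only [hT, not_false_eq_true, if_true, if_false, pow_eq_phiWeight, hne T hT, add_zero,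
      smul_add, mul_smul, H]
    abel

/-- The inner terms of the differentials, one for each position `i` of a product. -/
theorem phiLin_merge (q : F) {m : ℕ} (i : Fin (m + 1)) (p : M →ₗ[F] M)
    (c : Finset (Fin (m + 2)) → M) (d : Finset (Fin (m + 1)) → M)
    (h₀ : ∀ T, i ∈ T → d T = c (insert i.castSucc (liftSet i.castSucc T)))
    (h₁ : ∀ T, i ∉ T → d T = c (insert i.castSucc (liftSet i.castSucc T))
      + c (liftSet i.castSucc (insert i T)) + q • c (liftSet i.castSucc T)) :
    phiLin q (m + 1) p c = phiLin q m p d := by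
  rw [phiLin_apply, phiLin_apply, sum_phiWeight_merge q i (fun S => p (c S)),
    h₀ _ (Finset.mem_univ i), insert_liftSet_univ]
  congr 1
  refine Finset.sum_congr rfl fun T _ => ?_
  by_cases hT : i ∈ T
  · rw [if_pos hT, h₀ T hT]
  · rw [if_neg hT, h₁ T hT, map_add, map_add, map_smul]

end Aux

/-! ### Merging adjacent entries of a tuple -/

section Tuples

variable {Ω A : Type*}

theorem prodTuple_castSucc [Semigroup Ω] : ∀ {m : ℕ} (α : Fin (m + 2) → Ω),
    prodTuple α = prodTuple (fun i : Fin (m + 1) => α i.castSucc) * α (Fin.last (m + 1))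
  | 0, α => rfl
  | m + 1, α => by
    change α 0 * prodTuple (fun i => α i.succ)
      = α 0 * prodTuple (fun i : Fin (m + 1) => α i.succ.castSucc) * α (Fin.last (m + 2))
    rw [prodTuple_castSucc (fun i : Fin (m + 2) => α i.succ), ← mul_assoc]
    rfl

theorem mergeArg_eq_update {m : ℕ} (a : Fin (m + 2) → A) (i : Fin (m + 1)) (x : A) :
    mergeArg a i x = Function.update (fun j => a (i.castSucc.succAbove j)) i x := by
  funext j
  rcases lt_trichotomy j i with h | rfl | h
  · have h' : j.val < i.val := h
    rw [mergeArg, if_pos h', Function.update_of_ne h.ne,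
      Fin.succAbove_castSucc_of_lt _ _ h]
  · simp [mergeArg]
  · have h' : i.val < j.val := h
    rw [mergeArg, if_neg (by omega), if_neg (by omega), Function.update_of_ne h.ne',
      Fin.succAbove_castSucc_of_le _ _ h.le]

theorem mergeOmega_eq_update [Semigroup Ω] {m : ℕ} (α : Fin (m + 2) → Ω) (i : Fin (m + 1)) :
    mergeOmega α i = Function.update (fun j => α (i.castSucc.succAbove j)) i
      (α i.castSucc * α i.succ) := by
  rw [← mergeArg_eq_update]
  funext j
  by_cases h : j.val = i.val
  · obtain rfl := Fin.ext h
    simp [mergeArg, mergeOmega]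
  · simp [mergeArg, mergeOmega, h]

theorem prodTuple_mergeOmega [Semigroup Ω] : ∀ {m : ℕ} (α : Fin (m + 2) → Ω) (i : Fin (m + 1)),
    prodTuple (mergeOmega α i) = prodTuple α
  | 0, α, i => by
    obtain rfl : i = 0 := Fin.fin_one_eq_zero i
    simp [prodTuple, mergeOmega]
  | m + 1, α, i => by
    rw [prodTuple]
    induction i using Fin.cases with
    | zero =>
      simp [prodTuple, mergeOmega, mul_assoc]
    | succ j =>
      have h : (fun i : Fin (m + 1) => mergeOmega α j.succ i.succ)
          = mergeOmega (fun i => α i.succ) j := by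
        funext t
        simp [mergeOmega]
      rw [h, prodTuple_mergeOmega]
      simp [prodTuple, mergeOmega]

variable (P : Ω → A → A) {m : ℕ} (α : Fin (m + 2) → Ω) (u : Fin (m + 2) → A)
  (x : Fin (m + 2)) (T : Finset (Fin (m + 1)))

theorem applyOn_liftSet_succAbove (j : Fin (m + 1)) :
    applyOn P α u (liftSet x T) (x.succAbove j)
      = applyOn P (fun j => α (x.succAbove j)) (fun j => u (x.succAbove j)) T j := by
  simp [applyOn, succAbove_mem_liftSet]

theorem applyOn_insert_succAbove (j : Fin (m + 1)) :
    applyOn P α u (insert x (liftSet x T)) (x.succAbove j)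
      = applyOn P (fun j => α (x.succAbove j)) (fun j => u (x.succAbove j)) T j := by
  simp [applyOn, succAbove_mem_liftSet, Fin.succAbove_ne]

theorem applyOn_liftSet_self : applyOn P α u (liftSet x T) x = u x := by
  simp [applyOn, self_notMem_liftSet]

theorem applyOn_insert_self :
    applyOn P α u (insert x (liftSet x T)) x = P (α x) (u x) := by
  simp [applyOn]

/-- Away from the merged position `i` nothing is multiplied, so that `P` is applied as
before; at `i` itself, `P` carries the index `αᵢ αᵢ₊₁`. -/
theorem applyOn_mergeArg [Semigroup Ω] (i : Fin (m + 1)) (y : A) :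
    applyOn P (mergeOmega α i) (mergeArg u i y) T
      = Function.update (applyOn P (fun j => α (i.castSucc.succAbove j))
          (fun j => u (i.castSucc.succAbove j)) T) i
          (if i ∈ T then P (α i.castSucc * α i.succ) y else y) := by
  rw [mergeArg_eq_update, mergeOmega_eq_update]
  funext j
  by_cases h : j = i
  · subst h
    simp [applyOn]
  · simp [applyOn, h]

end Tuples

/-! ### The chain map identity -/

/-- `Φ` is a chain map in positive degrees: for every `n ≥ 1` and every `n`-cochain
`f` of the `Ω`-associative conformal algebra `A` with coefficients in the Rota-Baxter
family bimodule `M`, one has `Φ^{n+1}(δⁿ f) = ∂ⁿ(Φⁿ f)`.  (Here an `n`-cochain, for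
`n = k + 1 ≥ 1`, has `k + 1` arguments and `k` `λ`-parameters.) -/
theorem stmt_8 {F : Type*} [Field F] {Ω : Type*} [Semigroup Ω]
    {A M : Type*} [AddCommGroup A] [Module F A] [AddCommGroup M] [Module F M] (q : F)
    (D : A → A) (DM : M → M) (mul : F → Ω → Ω → A → A → A)
    (al : F → Ω → Ω → A → M → M) (ar : F → Ω → Ω → M → A → M)
    (hA : OmegaConfFun D mul)
    (P : Ω → A → A) (hP : IsRBFamilyOp D mul q P)
    (PM : Ω → M → M)
    (hM : OmegaBimodFun D DM mul al ar)
    (hRBM : IsRBFBimod DM al ar q P PM)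
    (k : ℕ)
    (f : (Fin k → F) → (Fin (k + 1) → Ω) → (Fin (k + 1) → A) → M)
    -- `f` is multilinear in its arguments
    (hfadd : ∀ (lam : Fin k → F) (α : Fin (k + 1) → Ω) (a : Fin (k + 1) → A)
        (i : Fin (k + 1)) (x y : A),
      f lam α (Function.update a i (x + y))
        = f lam α (Function.update a i x) + f lam α (Function.update a i y))
    (hfsmul : ∀ (lam : Fin k → F) (α : Fin (k + 1) → Ω) (a : Fin (k + 1) → A)
        (i : Fin (k + 1)) (c : F) (x : A),
      f lam α (Function.update a i (c • x)) = c • f lam α (Function.update a i x))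
    -- `f` satisfies the sesquilinearity conditions of a cochain
    (hfsesq : ∀ (lam : Fin k → F) (α : Fin (k + 1) → Ω) (a : Fin (k + 1) → A)
        (i : Fin k),
      f lam α (Function.update a i.castSucc (D (a i.castSucc)))
        = -(lam i) • f lam α a)
    (hflast : ∀ (lam : Fin k → F) (α : Fin (k + 1) → Ω) (a : Fin (k + 1) → A),
      f lam α (Function.update a (Fin.last k) (D (a (Fin.last k))))
        = DM (f lam α a) + (∑ i, lam i) • f lam α a) :
    phiMap q P PM (hochschildDiff mul al ar f)
      = rboDiff mul al ar q P PM (phiMap q P PM f) := by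
  obtain ⟨-, -, -, hPmul⟩ := hP
  obtain ⟨-, -, -, -, alAdd, alSmul, -, -, arAdd, arSmul, -⟩ := hM
  obtain ⟨PMadd, PMsmul, -, hPal, hPar⟩ := hRBM
  -- The operators and actions as linear maps of `M`.
  let p : Ω → M →ₗ[F] M := fun ω => ⟨⟨PM ω, PMadd ω⟩, PMsmul ω⟩
  let L : F → Ω → Ω → A → M →ₗ[F] M := fun l α β a =>
    ⟨⟨al l α β a, alAdd l α β a⟩, fun c => alSmul l c α β a⟩
  let R : F → Ω → Ω → A → M →ₗ[F] M := fun l α β a =>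
    ⟨⟨fun u => ar l α β u a, fun u v => arAdd l α β u v a⟩, fun c u => arSmul l c α β u a⟩
  funext lam α u
  have hphi : phiMap q P PM f = fun lam α u =>
      phiLin q k (p (prodTuple α)) (fun S => f lam α (applyOn P α u S)) := by
    funext lam α u
    exact phiMap_eq_phiLin q P p f lam α u
  rw [hphi]
  refine (phiMap_eq_phiLin q P p _ lam α u).trans ?_
  -- The three kinds of summands of `δ f`, as families indexed by subsets.
  let cl : Finset (Fin (k + 2)) → M := fun S =>
    al (lam 0) (α 0) (prodTuple fun i => α i.succ) (applyOn P α u S 0)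
      (f (fun i => lam i.succ) (fun i => α i.succ) fun i => applyOn P α u S i.succ)
  let cm : Fin (k + 1) → Finset (Fin (k + 2)) → M := fun i S =>
    f (mergeF lam i) (mergeOmega α i) (mergeArg (applyOn P α u S) i
      (mul (lam i) (α i.castSucc) (α i.succ)
        (applyOn P α u S i.castSucc) (applyOn P α u S i.succ)))
  let cr : Finset (Fin (k + 2)) → M := fun S =>
    ar (∑ j, lam j) (prodTuple fun j : Fin (k + 1) => α j.castSucc) (α (Fin.last (k + 1)))
      (f (fun j => lam j.castSucc) (fun j => α j.castSucc)
        fun j => applyOn P α u S j.castSucc)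
      (applyOn P α u S (Fin.last (k + 1)))
  have hsum : (fun S => hochschildDiff mul al ar f lam α (applyOn P α u S))
      = cl + ∑ i : Fin (k + 1), ((-1 : ℤ) ^ (i.val + 1)) • cm i + ((-1 : ℤ) ^ k) • cr := by
    funext S
    simp [hochschildDiff, cl, cm, cr, Finset.sum_apply]
  have hl := phiLin_outer q 0 (p (prodTuple α)) (p (prodTuple fun i => α i.succ))
    (L (lam 0) (α 0) (prodTuple fun i => α i.succ) (u 0))
    (L (lam 0) (α 0) (prodTuple fun i => α i.succ) (P (α 0) (u 0)))
    (fun v => hPal (lam 0) (α 0) _ (u 0) v) cl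
    (fun T => f (fun i => lam i.succ) (fun i => α i.succ)
      (applyOn P (fun i => α i.succ) (fun i => u i.succ) T))
    (fun T => by
      have h := applyOn_liftSet_succAbove P α u 0 T
      simp only [Fin.zero_succAbove] at h
      simp only [cl, h, applyOn_liftSet_self]
      rfl)
    (fun T => by
      have h := applyOn_insert_succAbove P α u 0 T
      simp only [Fin.zero_succAbove] at h
      simp only [cl, h, applyOn_insert_self]
      rfl)
  have hr := phiLin_outer q (Fin.last (k + 1)) (p (prodTuple α))
    (p (prodTuple fun j : Fin (k + 1) => α j.castSucc))
    (R (∑ j, lam j) (prodTuple fun j : Fin (k + 1) => α j.castSucc) (α (Fin.last (k + 1)))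
      (u (Fin.last (k + 1))))
    (R (∑ j, lam j) (prodTuple fun j : Fin (k + 1) => α j.castSucc) (α (Fin.last (k + 1)))
      (P (α (Fin.last (k + 1))) (u (Fin.last (k + 1)))))
    (fun v => by
      have h := hPar (∑ j, lam j) (prodTuple fun j : Fin (k + 1) => α j.castSucc)
        (α (Fin.last (k + 1))) v (u (Fin.last (k + 1)))
      rw [← prodTuple_castSucc] at h
      refine h.trans ?_
      rw [add_comm (ar _ _ _ v (P _ _))]
      rfl) cr
    (fun T => f (fun j => lam j.castSucc) (fun j => α j.castSucc)
      (applyOn P (fun j => α j.castSucc) (fun j => u j.castSucc) T))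
    (fun T => by
      have h := applyOn_liftSet_succAbove P α u (Fin.last (k + 1)) T
      simp only [Fin.succAbove_last] at h
      simp only [cr, h, applyOn_liftSet_self]
      rfl)
    (fun T => by
      have h := applyOn_insert_succAbove P α u (Fin.last (k + 1)) T
      simp only [Fin.succAbove_last] at h
      simp only [cr, h, applyOn_insert_self]
      rfl)
  have hm : ∀ i : Fin (k + 1), phiLin q (k + 1) (p (prodTuple α)) (cm i)
      = phiLin q k (p (prodTuple (mergeOmega α i))) (fun T =>
        f (mergeF lam i) (mergeOmega α i) (applyOn P (mergeOmega α i)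
          (mergeArg u i
            (mul (lam i) (α i.castSucc) (α i.succ) (P (α i.castSucc) (u i.castSucc))
                (u i.succ)
              + mul (lam i) (α i.castSucc) (α i.succ) (u i.castSucc)
                  (P (α i.succ) (u i.succ))
              + q • mul (lam i) (α i.castSucc) (α i.succ) (u i.castSucc) (u i.succ)))
          T)) := by
    intro i
    rw [prodTuple_mergeOmega]
    have e0 : ∀ T, applyOn P α u (liftSet i.castSucc T) i.succ
        = if i ∈ T then P (α i.succ) (u i.succ) else u i.succ := by
      intro T
      have h := applyOn_liftSet_succAbove P α u i.castSucc T i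
      rw [Fin.succAbove_castSucc_self] at h
      rw [h, applyOn, Fin.succAbove_castSucc_self]
    have e1 : ∀ T, applyOn P α u (insert i.castSucc (liftSet i.castSucc T)) i.succ
        = if i ∈ T then P (α i.succ) (u i.succ) else u i.succ := by
      intro T
      have h := applyOn_insert_succAbove P α u i.castSucc T i
      rw [Fin.succAbove_castSucc_self] at h
      rw [h, applyOn, Fin.succAbove_castSucc_self]
    refine phiLin_merge q i _ _ _ ?_ ?_
    · intro T hT
      rw [applyOn_mergeArg]
      simp only [cm, if_pos hT, ← hPmul, mergeArg_eq_update,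
        applyOn_insert_succAbove, applyOn_insert_self, e1]
    · intro T hT
      -- The entry at `i` is overwritten, so adding `i` to `T` has no effect on the others.
      have hins : ∀ y, Function.update (applyOn P (fun j => α (i.castSucc.succAbove j))
            (fun j => u (i.castSucc.succAbove j)) (insert i T)) i y
          = Function.update (applyOn P (fun j => α (i.castSucc.succAbove j))
            (fun j => u (i.castSucc.succAbove j)) T) i y := by
        intro y
        funext j
        by_cases h : j = i
        · subst h
          simp
        · simp [applyOn, h]
      rw [applyOn_mergeArg]
      simp only [cm, if_neg hT, mergeArg_eq_update,
        applyOn_insert_succAbove, applyOn_liftSet_succAbove, applyOn_insert_self,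
        applyOn_liftSet_self, e0, e1, hfadd, hfsmul, Finset.mem_insert_self, if_true]
      rw [show ∀ y, Function.update (fun j => applyOn P (fun j => α (i.castSucc.succAbove j))
            (fun j => u (i.castSucc.succAbove j)) (insert i T) j) i y = _ from hins]
  rw [hsum, map_add, map_add, map_sum, map_zsmul, hl, hr]
  simp only [map_zsmul, hm, smul_sub]
  rw [rboDiff, ← add_sub_assoc]
  rfl
end
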